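/- arXiv:2304.14858 — 2 statements merged into one kernel-verified Lean document; each statement's English description precedes it below -/
import Mathlib

section
/- Let (X, d) be a metric space and μ a Borel measure on X satisfying the doubling condition with constant C_D ≥ 1 and Q = log₂ C_D. Let 0 < α ≤ 1 and let a : X → [0, ∞) satisfy [a]_α < ∞. Then for every ball B_ρ(z) ⊆ X and all x, y ∈ B_ρ(z), one has |a(x) − a(y)| ≤ [a]_α · (2 · C_D² · μ(B_ρ(z)))^{α/Q}. -/
open MeasureTheory Metric

/- The quasi-distance `δ_μ(x,y) = (μ(B_{d(x,y)}(x)) + μ(B_{d(x,y)}(y)))^{1/Q}`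
for `x ≠ y`, and `δ_μ(x,x) = 0`. -/
open Classical in
noncomputable def deltaDist {X : Type*} [MetricSpace X] [MeasurableSpace X]
    (μ : MeasureTheory.Measure X) (Q : ℝ) (x y : X) : ℝ :=
  if x = y then 0
  else ((μ (Metric.ball x (dist x y)) + μ (Metric.ball y (dist x y))).toReal) ^ (1 / Q)

/-- The measure `μ` is doubling with constant `C`: balls of positive radius have positive finite
measure, and doubling the radius multiplies the measure by at most `C`. Mathlib's
`IsUnifLocDoublingMeasure` only constrains small radii, whereas here all radii are controlled. -/
structure IsDoublingWith {X : Type*} [PseudoMetricSpace X] [MeasurableSpace X]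
    (μ : Measure X) (C : ℝ) : Prop where
  measure_ball_pos : ∀ (x : X) (r : ℝ), 0 < r → 0 < μ (ball x r)
  measure_ball_two_mul_le : ∀ (x : X) (r : ℝ), 0 < r →
    μ (ball x (2 * r)) ≤ ENNReal.ofReal C * μ (ball x r)
  measure_ball_lt_top : ∀ (x : X) (r : ℝ), 0 < r → μ (ball x r) < ⊤

namespace IsDoublingWith

variable {X : Type*} [PseudoMetricSpace X] [MeasurableSpace X] {μ : Measure X} {C : ℝ}

lemma one_le [Nonempty X] (h : IsDoublingWith μ C) : 1 ≤ C := by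
  obtain ⟨x⟩ := ‹Nonempty X›
  have hle : 1 * μ (ball x 1) ≤ ENNReal.ofReal C * μ (ball x 1) :=
    calc 1 * μ (ball x 1) = μ (ball x 1) := one_mul _
      _ ≤ μ (ball x (2 * 1)) := measure_mono (ball_subset_ball (by norm_num))
      _ ≤ ENNReal.ofReal C * μ (ball x 1) := h.measure_ball_two_mul_le x 1 one_pos
  rwa [ENNReal.mul_le_mul_iff_left (h.measure_ball_pos x 1 one_pos).ne'
    (h.measure_ball_lt_top x 1 one_pos).ne, ENNReal.one_le_ofReal] at hle

lemma measureReal_ball_two_mul_le (h : IsDoublingWith μ C) (x : X) {r : ℝ} (hr : 0 < r) :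
    μ.real (ball x (2 * r)) ≤ C * μ.real (ball x r) := by
  have : Nonempty X := ⟨x⟩
  have hC : 0 ≤ C := zero_le_one.trans h.one_le
  have hfin : ENNReal.ofReal C * μ (ball x r) ≠ ⊤ :=
    ENNReal.mul_ne_top ENNReal.ofReal_ne_top (h.measure_ball_lt_top x r hr).ne
  simpa only [Measure.real, ENNReal.toReal_mul, ENNReal.toReal_ofReal hC] using
    ENNReal.toReal_mono hfin (h.measure_ball_two_mul_le x r hr)

lemma measureReal_ball_two_pow_mul_le (h : IsDoublingWith μ C) (x : X) {r : ℝ} (hr : 0 < r)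
    (n : ℕ) : μ.real (ball x (2 ^ n * r)) ≤ C ^ n * μ.real (ball x r) := by
  have : Nonempty X := ⟨x⟩
  have hC : 0 ≤ C := zero_le_one.trans h.one_le
  induction n with
  | zero => simp
  | succ n ih =>
    calc μ.real (ball x (2 ^ (n + 1) * r)) = μ.real (ball x (2 * (2 ^ n * r))) := by
          rw [pow_succ', mul_assoc]
      _ ≤ C * μ.real (ball x (2 ^ n * r)) := h.measureReal_ball_two_mul_le x (by positivity)
      _ ≤ C * (C ^ n * μ.real (ball x r)) := by gcongr
      _ = C ^ (n + 1) * μ.real (ball x r) := by rw [pow_succ', mul_assoc]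

lemma measureReal_ball_le_pow_mul (h : IsDoublingWith μ C) {x z : X} {r ρ : ℝ} (hρ : 0 < ρ)
    {n : ℕ} (hr : r + dist x z ≤ 2 ^ n * ρ) :
    μ.real (ball x r) ≤ C ^ n * μ.real (ball z ρ) :=
  calc μ.real (ball x r) ≤ μ.real (ball z (2 ^ n * ρ)) :=
        measureReal_mono (ball_subset_ball' hr)
          (h.measure_ball_lt_top z (2 ^ n * ρ) (by positivity)).ne
    _ ≤ C ^ n * μ.real (ball z ρ) := h.measureReal_ball_two_pow_mul_le z hρ n

lemma measureReal_ball_dist_le (h : IsDoublingWith μ C) {x y z : X} {ρ : ℝ}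
    (hx : x ∈ ball z ρ) (hy : y ∈ ball z ρ) :
    μ.real (ball x (dist x y)) ≤ C ^ 2 * μ.real (ball z ρ) := by
  have hρ : 0 < ρ := pos_of_mem_ball hx
  rw [mem_ball] at hx hy
  -- `d(x, y) + d(x, z) < 3ρ ≤ 4ρ`, so doubling `B_ρ(z)` twice covers the ball around `x`.
  refine h.measureReal_ball_le_pow_mul hρ ?_
  linarith [dist_triangle_right x y z]

end IsDoublingWith

section DeltaDist

variable {X : Type*} [MetricSpace X] [MeasurableSpace X] {μ : Measure X} {C Q : ℝ}

lemma deltaDist_nonneg (μ : Measure X) (Q : ℝ) (x y : X) : 0 ≤ deltaDist μ Q x y := by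
  rw [deltaDist]
  positivity

lemma IsDoublingWith.deltaDist_of_ne (h : IsDoublingWith μ C) (Q : ℝ) {x y : X} (hxy : x ≠ y) :
    deltaDist μ Q x y =
      (μ.real (ball x (dist x y)) + μ.real (ball y (dist x y))) ^ (1 / Q) := by
  have hd : 0 < dist x y := dist_pos.2 hxy
  rw [deltaDist, if_neg hxy, ENNReal.toReal_add (h.measure_ball_lt_top x _ hd).ne
    (h.measure_ball_lt_top y _ hd).ne, Measure.real, Measure.real]

lemma IsDoublingWith.deltaDist_le (h : IsDoublingWith μ C) (hQ : 0 ≤ Q) {x y z : X} {ρ : ℝ}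
    (hx : x ∈ ball z ρ) (hy : y ∈ ball z ρ) :
    deltaDist μ Q x y ≤ (2 * C ^ 2 * μ.real (ball z ρ)) ^ (1 / Q) := by
  rcases eq_or_ne x y with rfl | hxy
  · rw [deltaDist, if_pos rfl]
    positivity
  · have hμx : μ.real (ball x (dist x y)) ≤ C ^ 2 * μ.real (ball z ρ) :=
      h.measureReal_ball_dist_le hx hy
    have hμy : μ.real (ball y (dist x y)) ≤ C ^ 2 * μ.real (ball z ρ) :=
      dist_comm y x ▸ h.measureReal_ball_dist_le hy hx
    rw [h.deltaDist_of_ne Q hxy]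
    gcongr
    linarith

end DeltaDist

theorem stmt2_general {X Y : Type*} [MetricSpace X] [MeasurableSpace X] [PseudoMetricSpace Y]
    {μ : Measure X} {C Q α A : ℝ} (hμ : IsDoublingWith μ C) (hQ : Q = Real.logb 2 C)
    (hα : 0 ≤ α) (hA : 0 ≤ A) {f : X → Y}
    (hf : ∀ x y : X, x ≠ y → dist (f x) (f y) ≤ A * deltaDist μ Q x y ^ α)
    {z : X} {ρ : ℝ} {x y : X} (hx : x ∈ ball z ρ) (hy : y ∈ ball z ρ) :
    dist (f x) (f y) ≤ A * (2 * C ^ 2 * μ.real (ball z ρ)) ^ (α / Q) := by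
  rcases eq_or_ne x y with rfl | hxy
  · rw [dist_self]
    positivity
  have : Nonempty X := ⟨z⟩
  have hQ0 : 0 ≤ Q := hQ ▸ Real.logb_nonneg one_lt_two hμ.one_le
  calc dist (f x) (f y) ≤ A * deltaDist μ Q x y ^ α := hf x y hxy
    _ ≤ A * ((2 * C ^ 2 * μ.real (ball z ρ)) ^ (1 / Q)) ^ α := by
        gcongr
        · exact deltaDist_nonneg μ Q x y
        · exact hμ.deltaDist_le hQ0 hx hy
    _ = A * (2 * C ^ 2 * μ.real (ball z ρ)) ^ (α / Q) := by
        rw [← Real.rpow_mul (by positivity), one_div_mul_eq_div]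

/-- If `μ` is doubling with constant `C_D ≥ 1`, `Q = log₂ C_D`, and
`a : X → [0,∞)` is `α`-Hölder continuous with respect to `δ_μ` with seminorm `[a]_α = A`,
then for any ball `B_ρ(z)` and `x, y ∈ B_ρ(z)` we have
`|a(x) - a(y)| ≤ [a]_α (2 C_D² μ(B_ρ(z)))^{α/Q}`. -/
theorem stmt2 {X : Type*} [MetricSpace X] [MeasurableSpace X] [BorelSpace X]
    (μ : Measure X) (C_D : ℝ) (hCD : 1 ≤ C_D)
    (hD : ∀ (x : X) (r : ℝ), 0 < r →
      0 < μ (ball x r) ∧ μ (ball x (2 * r)) ≤ ENNReal.ofReal C_D * μ (ball x r) ∧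
        μ (ball x r) < ⊤)
    (Q : ℝ) (hQ : Q = Real.logb 2 C_D)
    (α : ℝ) (hα0 : 0 < α) (hα1 : α ≤ 1)
    (a : X → ℝ) (ha : ∀ x, 0 ≤ a x)
    (A : ℝ) (hA : 0 ≤ A)
    (hHolder : ∀ x y : X, x ≠ y → |a x - a y| ≤ A * deltaDist μ Q x y ^ α) :
    ∀ (z : X) (ρ : ℝ) (x y : X), x ∈ ball z ρ → y ∈ ball z ρ →
      |a x - a y| ≤ A * (2 * C_D ^ 2 * (μ (ball z ρ)).toReal) ^ (α / Q) := by
  have hμ : IsDoublingWith μ C_D :=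
    ⟨fun x r hr ↦ (hD x r hr).1, fun x r hr ↦ (hD x r hr).2.1, fun x r hr ↦ (hD x r hr).2.2⟩
  exact fun _ _ _ _ hx hy ↦ stmt2_general (f := a) hμ hQ hα0.le hA hHolder hx hy
end

section
/- Let (X, d) be a metric space and μ a Borel measure on X satisfying the doubling condition with constant C_D ≥ 1 and Q = log₂ C_D. Let 0 < α ≤ 1 and let a : X → [0, ∞) satisfy [a]_α < ∞. Let B_ρ(z) ⊆ X be a ball and set a₀ = inf_{x ∈ B_ρ(z)} a(x). If a₀ > 2 · [a]_α · (2 · C_D² · μ(B_ρ(z)))^{α/Q}, then a₀ ≤ a(x) ≤ 2a₀ for every x ∈ B_ρ(z). -/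
open MeasureTheory Metric

/-!
For `x, y ∈ B_ρ(z)` the balls of radius `d(x, y) < 2ρ` around `x` and `y` lie in `B_{3ρ}(z)`, whose
measure is at most `C_D² μ(B_ρ(z))` by doubling twice. Hence `δ_μ(x, y)^α` is at most
`(2 C_D² μ(B_ρ(z)))^{α/Q}`, so the oscillation of `a` on `B_ρ(z)` is at most `[a]_α` times this
quantity. As that product does not exceed `a₀`, no value of `a` on the ball exceeds `a₀ + a₀`.
-/

open Set
open scoped ENNReal

section Infimum

variable {ι : Type*} {f : ι → ℝ} {s : Set ι} {M : ℝ} {i : ι}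

theorem sInf_image_le_of_forall_abs_sub_le (h : ∀ i ∈ s, ∀ j ∈ s, |f i - f j| ≤ M) (hi : i ∈ s) :
    sInf (f '' s) ≤ f i := by
  have hbdd : BddBelow (f '' s) :=
    ⟨f i - M, forall_mem_image.2 fun j hj ↦ sub_le_of_abs_sub_le_right (h i hi j hj)⟩
  exact csInf_le hbdd (mem_image_of_mem f hi)

theorem le_sInf_image_add_of_forall_abs_sub_le (h : ∀ i ∈ s, ∀ j ∈ s, |f i - f j| ≤ M)
    (hi : i ∈ s) : f i ≤ sInf (f '' s) + M := by
  rw [← sub_le_iff_le_add]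
  exact le_csInf ⟨f i, mem_image_of_mem f hi⟩
    (forall_mem_image.2 fun j hj ↦ sub_le_of_abs_sub_le_right (h i hi j hj))

end Infimum

section Doubling

variable {X : Type*} [PseudoMetricSpace X] [MeasurableSpace X] {μ : Measure X} {x : X}

theorem measure_ball_two_pow_mul_le {c : ℝ≥0∞}
    (h : ∀ r, 0 < r → μ (ball x (2 * r)) ≤ c * μ (ball x r)) {r : ℝ} (hr : 0 < r) (n : ℕ) :
    μ (ball x (2 ^ n * r)) ≤ c ^ n * μ (ball x r) := by
  induction n with
  | zero => simp
  | succ n ih =>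
    calc μ (ball x (2 ^ (n + 1) * r)) = μ (ball x (2 * (2 ^ n * r))) := by ring_nf
      _ ≤ c * μ (ball x (2 ^ n * r)) := h _ (by positivity)
      _ ≤ c * (c ^ n * μ (ball x r)) := by gcongr
      _ = c ^ (n + 1) * μ (ball x r) := by ring

theorem measure_ball_three_mul_le {c : ℝ≥0∞}
    (h : ∀ r, 0 < r → μ (ball x (2 * r)) ≤ c * μ (ball x r)) {r : ℝ} (hr : 0 < r) :
    μ (ball x (3 * r)) ≤ c ^ 2 * μ (ball x r) :=
  calc μ (ball x (3 * r)) ≤ μ (ball x (2 ^ 2 * r)) := by gcongr; norm_num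
    _ ≤ c ^ 2 * μ (ball x r) := measure_ball_two_pow_mul_le h hr 2

theorem measureReal_ball_dist_le {y z : X} {ρ : ℝ} (hfin : μ (ball z (3 * ρ)) ≠ ∞)
    (hx : x ∈ ball z ρ) (hy : y ∈ ball z ρ) :
    μ.real (ball x (dist x y)) ≤ μ.real (ball z (3 * ρ)) := by
  refine measureReal_mono (ball_subset_ball' ?_) hfin
  linarith [dist_triangle_right x y z, mem_ball.1 hx, mem_ball.1 hy]

end Doubling

section QuasiDistance

variable {X : Type*} [MetricSpace X] [MeasurableSpace X] {μ : Measure X} {Q α ρ : ℝ} {x y z : X}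

theorem deltaDist_rpow_of_ne (hxy : x ≠ y) :
    deltaDist μ Q x y ^ α
      = (μ (ball x (dist x y)) + μ (ball y (dist x y))).toReal ^ (α / Q) := by
  rw [deltaDist, if_neg hxy, ← Real.rpow_mul ENNReal.toReal_nonneg, one_div_mul_eq_div]

theorem deltaDist_rpow_le (hα : 0 ≤ α) (hQ : 0 ≤ Q) (hfin : μ (ball z (3 * ρ)) ≠ ∞)
    (hx : x ∈ ball z ρ) (hy : y ∈ ball z ρ) (hxy : x ≠ y) :
    deltaDist μ Q x y ^ α ≤ (2 * μ.real (ball z (3 * ρ))) ^ (α / Q) := by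
  have hsum : (μ (ball x (dist x y)) + μ (ball y (dist x y))).toReal
      ≤ 2 * μ.real (ball z (3 * ρ)) :=
    calc (μ (ball x (dist x y)) + μ (ball y (dist x y))).toReal
        ≤ μ.real (ball x (dist x y)) + μ.real (ball y (dist y x)) := by
          rw [dist_comm y x]
          exact ENNReal.toReal_add_le
      _ ≤ μ.real (ball z (3 * ρ)) + μ.real (ball z (3 * ρ)) :=
          add_le_add (measureReal_ball_dist_le hfin hx hy) (measureReal_ball_dist_le hfin hy hx)
      _ = 2 * μ.real (ball z (3 * ρ)) := (two_mul _).symm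
  rw [deltaDist_rpow_of_ne hxy]
  exact Real.rpow_le_rpow ENNReal.toReal_nonneg hsum (div_nonneg hα hQ)

theorem abs_sub_le_of_pairwise_deltaDist {a : X → ℝ} {A : ℝ} (hα : 0 ≤ α) (hQ : 0 ≤ Q)
    (hA : 0 ≤ A) (hfin : μ (ball z (3 * ρ)) ≠ ∞)
    (ha : (ball z ρ).Pairwise fun x y ↦ |a x - a y| ≤ A * deltaDist μ Q x y ^ α)
    (hx : x ∈ ball z ρ) (hy : y ∈ ball z ρ) :
    |a x - a y| ≤ A * (2 * μ.real (ball z (3 * ρ))) ^ (α / Q) := by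
  rcases eq_or_ne x y with rfl | hxy
  · rw [sub_self, abs_zero]
    positivity
  · calc |a x - a y| ≤ A * deltaDist μ Q x y ^ α := ha hx hy hxy
      _ ≤ A * (2 * μ.real (ball z (3 * ρ))) ^ (α / Q) := by
          gcongr
          exact deltaDist_rpow_le hα hQ hfin hx hy hxy

theorem abs_sub_le_of_doubling {C : ℝ} {a : X → ℝ} {A : ℝ} (hC : 0 ≤ C)
    (hD : ∀ r, 0 < r → μ (ball z (2 * r)) ≤ ENNReal.ofReal C * μ (ball z r))
    (hfin : μ (ball z ρ) ≠ ∞) (hα : 0 ≤ α) (hQ : 0 ≤ Q) (hA : 0 ≤ A)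
    (ha : (ball z ρ).Pairwise fun x y ↦ |a x - a y| ≤ A * deltaDist μ Q x y ^ α)
    (hx : x ∈ ball z ρ) (hy : y ∈ ball z ρ) :
    |a x - a y| ≤ A * (2 * C ^ 2 * μ.real (ball z ρ)) ^ (α / Q) := by
  have htriple := measure_ball_three_mul_le hD (pos_of_mem_ball hx)
  have hfin_mul : ENNReal.ofReal C ^ 2 * μ (ball z ρ) ≠ ∞ :=
    ENNReal.mul_ne_top (ENNReal.pow_ne_top ENNReal.ofReal_ne_top) hfin
  have htriple_real : μ.real (ball z (3 * ρ)) ≤ C ^ 2 * μ.real (ball z ρ) := by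
    simpa only [Measure.real, ENNReal.toReal_mul, ENNReal.toReal_pow, ENNReal.toReal_ofReal hC]
      using ENNReal.toReal_mono hfin_mul htriple
  calc |a x - a y| ≤ A * (2 * μ.real (ball z (3 * ρ))) ^ (α / Q) :=
        abs_sub_le_of_pairwise_deltaDist hα hQ hA (ne_top_of_le_ne_top hfin_mul htriple) ha hx hy
    _ ≤ A * (2 * C ^ 2 * μ.real (ball z ρ)) ^ (α / Q) := by
        rw [mul_assoc 2]
        gcongr

end QuasiDistance

theorem stmt3_general {X : Type*} [MetricSpace X] [MeasurableSpace X] {μ : Measure X}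
    {C_D Q α A ρ a₀ : ℝ} {a : X → ℝ} {z : X} (hCD : 1 ≤ C_D)
    (hD : ∀ r, 0 < r → μ (ball z (2 * r)) ≤ ENNReal.ofReal C_D * μ (ball z r))
    (hfin : μ (ball z ρ) ≠ ∞) (hQ : Q = Real.logb 2 C_D) (hα : 0 ≤ α) (hA : 0 ≤ A)
    (hHolder : (ball z ρ).Pairwise fun x y ↦ |a x - a y| ≤ A * deltaDist μ Q x y ^ α)
    (ha₀ : a₀ = sInf (a '' ball z ρ))
    (hbig : A * (2 * C_D ^ 2 * μ.real (ball z ρ)) ^ (α / Q) ≤ a₀) :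
    ∀ x ∈ ball z ρ, a₀ ≤ a x ∧ a x ≤ 2 * a₀ := by
  intro x hx
  have hQ_nonneg : 0 ≤ Q := hQ ▸ Real.logb_nonneg one_lt_two hCD
  have hosc : ∀ x ∈ ball z ρ, ∀ y ∈ ball z ρ, |a x - a y| ≤ a₀ := fun x hx y hy ↦
    (abs_sub_le_of_doubling (zero_le_one.trans hCD) hD hfin hα hQ_nonneg hA hHolder hx hy).trans
      hbig
  have hlower : a₀ ≤ a x := ha₀ ▸ sInf_image_le_of_forall_abs_sub_le hosc hx
  have hupper : a x ≤ sInf (a '' ball z ρ) + a₀ := le_sInf_image_add_of_forall_abs_sub_le hosc hx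
  rw [← ha₀, ← two_mul] at hupper
  exact ⟨hlower, hupper⟩

/-- If `μ` is doubling with constant `C_D ≥ 1`, `Q = log₂ C_D`,
`a : X → [0,∞)` is `α`-Hölder continuous with respect to `δ_μ` with seminorm `[a]_α = A`,
and `a₀ = inf_{B_ρ(z)} a` satisfies `a₀ > 2 [a]_α (2 C_D² μ(B_ρ(z)))^{α/Q}`, then
`a₀ ≤ a(x) ≤ 2 a₀` for every `x ∈ B_ρ(z)`. -/
theorem stmt3 {X : Type*} [MetricSpace X] [MeasurableSpace X] [BorelSpace X]
    (μ : Measure X) (C_D : ℝ) (hCD : 1 ≤ C_D)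
    (hD : ∀ (x : X) (r : ℝ), 0 < r →
      0 < μ (ball x r) ∧ μ (ball x (2 * r)) ≤ ENNReal.ofReal C_D * μ (ball x r) ∧
        μ (ball x r) < ⊤)
    (Q : ℝ) (hQ : Q = Real.logb 2 C_D)
    (α : ℝ) (hα0 : 0 < α) (hα1 : α ≤ 1)
    (a : X → ℝ) (ha : ∀ x, 0 ≤ a x)
    (A : ℝ) (hA : 0 ≤ A)
    (hHolder : ∀ x y : X, x ≠ y → |a x - a y| ≤ A * deltaDist μ Q x y ^ α)
    (z : X) (ρ : ℝ) (a₀ : ℝ) (ha₀ : a₀ = sInf (a '' ball z ρ))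
    (hbig : a₀ > 2 * A * (2 * C_D ^ 2 * (μ (ball z ρ)).toReal) ^ (α / Q)) :
    ∀ x ∈ ball z ρ, a₀ ≤ a x ∧ a x ≤ 2 * a₀ := by
  refine fun x hx ↦ stmt3_general hCD (fun r hr ↦ (hD z r hr).2.1)
    (hD z ρ (pos_of_mem_ball hx)).2.2.ne hQ hα0.le hA (fun x _ y _ ↦ hHolder x y) ha₀
    (le_trans ?_ hbig.le) x hx
  exact mul_le_mul_of_nonneg_right (by linarith) (by positivity)
end
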